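/- Let α ∈ (1,2), λ ∈ ((α−1)/2, 1/2), and let δ satisfy 0 < δ < min{(λ + 3/2)/α, 3/2} − 1 (one may also take δ = min{(λ + 3/2)/α, 3/2} − 1 when λ + 3/2 ≠ (3/2)α). Then there exists a constant C > 0, depending only on α, λ and δ, such that for all t > 0 one has Σ_{k₂ ∈ ℤ} 2^{−2·max{k₂,0}} · min{ 2^{(λ + 3/2) k₂}, t^{−3/2} · 2^{(λ − (3/2)α + 3/2) k₂} } ≤ C (1+t)^{−1−δ}. -/

import Mathlib

/-!
Write `a = lam + 3/2`, `β = 1 + δ` and `t = 2 ^ (α s)`. Up to the factor `2 ^ (-2 k₊)`, the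
`k`-th term is `2 ^ (a k) * min 1 (2 ^ (-(3/2) α (k + s)))`, so every estimate becomes a piecewise
linear inequality between exponents (`term_le`), and the sums are controlled by the two-sided
geometric series `∑ 2 ^ (-c |k + m|)`, whose value does not depend on the shift `m`
(`tsum_le_of_geometric`).

* For `t ≤ 1` the first entry of the minimum suffices: `a k - 2 k₊ ≤ -c |k|` because `0 < a < 2`.
* For `t ≥ 1` and `α β < a`, interpolating between the entries of the minimum (`β ≤ 3/2`) bounds
  the exponent by `-α β s + (a - α β) k - 2 k₊`, and `0 < a - α β < 2`. This covers the endpoint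
  `β = 3/2 < a / α` too.
* For `t ≥ 1` and `α β = a < (3/2) α`, the weight `2 ^ (-2 k₊)` is dropped. The exponent is at most
  `-a s - c |k + s|`, a geometric series centred near `k = -s` on either side of which a different
  entry of the minimum decays.
-/

open scoped ENNReal

noncomputable section

lemma summable_two_rpow_neg_abs {c : ℝ} (hc : 0 < c) :
    Summable fun k : ℤ => (2 : ℝ) ^ (-c * |(k : ℝ)|) := by
  have h : Summable fun n : ℕ => (2 : ℝ) ^ (-c * (n : ℝ)) := by
    have h1 : (2 : ℝ) ^ (-c) < 1 := Real.rpow_lt_one_of_one_lt_of_neg (by norm_num) (by linarith)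
    refine (summable_geometric_of_lt_one (by positivity) h1).congr fun n => ?_
    rw [Real.rpow_mul (by norm_num), Real.rpow_natCast]
  refine Summable.of_nat_of_neg ?_ ?_
  · simpa using h
  · simpa using h

/-- A family on `ℤ` dominated by a two-sided geometric sequence of amplitude `M` has sum `O(M)`,
uniformly in the centre `-m` of the sequence. -/
lemma tsum_le_of_geometric {c : ℝ} (hc : 0 < c) :
    ∃ K : ℝ, 0 < K ∧ ∀ (m : ℤ) (M : ℝ) (f : ℤ → ℝ), 0 ≤ M →
      (∀ k, f k ≤ M * (2 : ℝ) ^ (-c * |((k + m : ℤ) : ℝ)|)) →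
      ∑' k, ENNReal.ofReal (f k) ≤ ENNReal.ofReal (M * K) := by
  have hs := summable_two_rpow_neg_abs hc
  refine ⟨∑' k : ℤ, (2 : ℝ) ^ (-c * |(k : ℝ)|),
    hs.tsum_pos (fun k => by positivity) 0 (by positivity), fun m M f hM hf => ?_⟩
  calc ∑' k, ENNReal.ofReal (f k)
      ≤ ∑' k : ℤ, ENNReal.ofReal (M * (2 : ℝ) ^ (-c * |((k + m : ℤ) : ℝ)|)) :=
        ENNReal.tsum_le_tsum fun k => ENNReal.ofReal_le_ofReal (hf k)
    _ = ∑' k : ℤ, ENNReal.ofReal (M * (2 : ℝ) ^ (-c * |(k : ℝ)|)) :=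
        (Equiv.addRight m).tsum_eq
          (fun k : ℤ => ENNReal.ofReal (M * (2 : ℝ) ^ (-c * |(k : ℝ)|)))
    _ = ENNReal.ofReal (M * ∑' k : ℤ, (2 : ℝ) ^ (-c * |(k : ℝ)|)) := by
        rw [← tsum_mul_left, ENNReal.ofReal_tsum_of_nonneg (fun k => by positivity)
          (hs.mul_left M)]
    _ ≤ _ := le_rfl

/-- The weight `2 ^ (-2 k₊)` turns `2 ^ (b k)`, `0 < b < 2`, into a two-sided decaying sequence. -/
lemma exponent_le {b : ℝ} (k : ℤ) :
    -2 * ((max k 0 : ℤ) : ℝ) + b * k ≤ -(min b (2 - b)) * |(k : ℝ)| := by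
  have h1 := min_le_left b (2 - b)
  have h2 := min_le_right b (2 - b)
  rcases le_total k 0 with hk | hk
  · have hk' : (k : ℝ) ≤ 0 := by exact_mod_cast hk
    rw [max_eq_right hk, abs_of_nonpos hk']
    push_cast
    nlinarith
  · have hk' : (0 : ℝ) ≤ k := by exact_mod_cast hk
    rw [max_eq_left hk, abs_of_nonneg hk']
    nlinarith

/-- With `t = 2 ^ (α s)`, it suffices to compare `E` with the exponent of one of the two entries
of the minimum. -/
lemma term_le {α lam s t E : ℝ} (ht : t = (2 : ℝ) ^ (α * s)) (k : ℤ)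
    (h : -2 * ((max k 0 : ℤ) : ℝ) + (lam + 3 / 2) * k ≤ E ∨
      -2 * ((max k 0 : ℤ) : ℝ) + ((lam + 3 / 2) * k - 3 / 2 * α * (k + s)) ≤ E) :
    (2 : ℝ) ^ (-(2 : ℝ) * (max k 0 : ℤ)) *
      min ((2 : ℝ) ^ ((lam + 3 / 2) * (k : ℝ)))
        (t ^ (-(3 : ℝ) / 2) * (2 : ℝ) ^ ((lam - (3 / 2) * α + 3 / 2) * (k : ℝ))) ≤ 2 ^ E := by
  rcases h with h | h
  · refine (mul_le_mul_of_nonneg_left (min_le_left _ _) (by positivity)).trans ?_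
    rw [← Real.rpow_add (by norm_num)]
    exact Real.rpow_le_rpow_of_exponent_le (by norm_num) h
  · refine (mul_le_mul_of_nonneg_left (min_le_right _ _) (by positivity)).trans ?_
    rw [ht, ← Real.rpow_mul (by norm_num), ← Real.rpow_add (by norm_num),
      ← Real.rpow_add (by norm_num)]
    exact Real.rpow_le_rpow_of_exponent_le (by norm_num) (by linarith)

/-- A bound by a constant for `t ≤ 1` and by a multiple of `t ^ (-β)` for `t ≥ 1` amounts to a
bound by a multiple of `(1 + t) ^ (-β)`. -/
lemma combine {β K₁ K₂ : ℝ} (hβ : 0 < β) (h₁ : 0 < K₁) (h₂ : 0 < K₂) {F : ℝ → ℝ≥0∞}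
    (hs : ∀ t, 0 < t → t ≤ 1 → F t ≤ ENNReal.ofReal K₁)
    (hl : ∀ t, 1 ≤ t → F t ≤ ENNReal.ofReal (t ^ (-β) * K₂)) :
    ∃ C : ℝ, 0 < C ∧ ∀ t, 0 < t → F t ≤ ENNReal.ofReal (C * (1 + t) ^ (-β)) := by
  have e : (2 : ℝ) ^ β * 2 ^ (-β) = 1 := by
    rw [← Real.rpow_add (by norm_num)]; simp
  refine ⟨(K₁ + K₂) * 2 ^ β, by positivity, fun t ht => ?_⟩
  rcases le_total t 1 with h | h
  · refine (hs t ht h).trans (ENNReal.ofReal_le_ofReal ?_)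
    have : (2 : ℝ) ^ (-β) ≤ (1 + t) ^ (-β) :=
      Real.rpow_le_rpow_of_nonpos (by linarith) (by linarith) (by linarith)
    calc K₁ ≤ (K₁ + K₂) * (2 ^ β * 2 ^ (-β)) := by rw [e]; linarith
      _ = (K₁ + K₂) * 2 ^ β * 2 ^ (-β) := by ring
      _ ≤ _ := by gcongr
  · refine (hl t h).trans (ENNReal.ofReal_le_ofReal ?_)
    have h3 : (2 * t) ^ (-β) ≤ (1 + t) ^ (-β) :=
      Real.rpow_le_rpow_of_nonpos (by linarith) (by linarith) (by linarith)
    have h4 : (2 * t) ^ (-β) = 2 ^ (-β) * t ^ (-β) := Real.mul_rpow (by norm_num) ht.le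
    have h5 : 0 < t ^ (-β) := by positivity
    calc t ^ (-β) * K₂ ≤ (K₁ + K₂) * (2 ^ β * 2 ^ (-β)) * t ^ (-β) := by rw [e]; nlinarith
      _ = (K₁ + K₂) * 2 ^ β * (2 * t) ^ (-β) := by rw [h4]; ring
      _ ≤ _ := by gcongr

/-- Let `α ∈ (1,2)`, `λ ∈ ((α−1)/2, 1/2)` and
`0 < δ ≤ min{(λ+3/2)/α, 3/2} − 1`, where the endpoint value is allowed when
`λ + 3/2 ≠ (3/2)α`.  Then there is `C > 0`, depending only on `α, λ, δ`, such that
for all `t > 0`,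
`Σ_{k₂∈ℤ} 2^{−2k₂₊} min{2^{(λ+3/2)k₂}, t^{−3/2} 2^{(λ−(3/2)α+3/2)k₂}} ≤ C (1+t)^{−1−δ}`. -/
theorem stmt14 (α lam δ : ℝ) (hα : α ∈ Set.Ioo (1 : ℝ) 2)
    (hlam : lam ∈ Set.Ioo ((α - 1) / 2) (1 / 2 : ℝ))
    (hδpos : 0 < δ)
    (hδ : δ < min ((lam + 3 / 2) / α) (3 / 2 : ℝ) - 1 ∨
      (δ = min ((lam + 3 / 2) / α) (3 / 2 : ℝ) - 1 ∧ lam + 3 / 2 ≠ (3 / 2) * α)) :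
    ∃ C : ℝ, 0 < C ∧ ∀ t : ℝ, 0 < t →
      ∑' k₂ : ℤ,
          ENNReal.ofReal ((2 : ℝ) ^ (-(2 : ℝ) * (max k₂ 0 : ℤ)) *
            min ((2 : ℝ) ^ ((lam + 3 / 2) * (k₂ : ℝ)))
              (t ^ (-(3 : ℝ) / 2) * (2 : ℝ) ^ ((lam - (3 / 2) * α + 3 / 2) * (k₂ : ℝ)))) ≤
        ENNReal.ofReal (C * (1 + t) ^ (-1 - δ)) := by
  obtain ⟨hα1, hα2⟩ := hα
  obtain ⟨hl1, hl2⟩ := hlam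
  have hα0 : 0 < α := by linarith
  have hm1 := min_le_left ((lam + 3 / 2) / α) (3 / 2 : ℝ)
  have hm2 := min_le_right ((lam + 3 / 2) / α) (3 / 2 : ℝ)
  -- the endpoint `1 + δ = 3/2` belongs to the first alternative
  have hcases : (α * (1 + δ) < lam + 3 / 2 ∧ 1 + δ ≤ 3 / 2) ∨
      (α * (1 + δ) = lam + 3 / 2 ∧ lam + 3 / 2 < 3 / 2 * α) := by
    rcases hδ with h | ⟨h, hne⟩
    · refine Or.inl ⟨?_, by linarith⟩
      have : 1 + δ < (lam + 3 / 2) / α := by linarith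
      rw [lt_div_iff₀ hα0] at this
      linarith
    · rcases lt_or_gt_of_ne hne with h' | h'
      · have : (lam + 3 / 2) / α < 3 / 2 := by rwa [div_lt_iff₀ hα0]
        rw [min_eq_left this.le] at h
        refine Or.inr ⟨?_, h'⟩
        rw [h]
        field_simp
        ring
      · have : 3 / 2 < (lam + 3 / 2) / α := by rwa [lt_div_iff₀ hα0]
        rw [min_eq_right this.le] at h
        refine Or.inl ⟨?_, by linarith⟩
        rw [h]
        linarith
  have hrepr : ∀ t : ℝ, 0 < t → ∃ s : ℝ, t = (2 : ℝ) ^ (α * s) := fun t ht =>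
    ⟨Real.logb 2 t / α, by
      rw [mul_div_cancel₀ _ hα0.ne', Real.rpow_logb (by norm_num) (by norm_num) ht]⟩
  rw [show -1 - δ = -(1 + δ) by ring]
  obtain ⟨K₁, hK₁, H₁⟩ := tsum_le_of_geometric
    (c := min (lam + 3 / 2) (2 - (lam + 3 / 2))) (lt_min (by linarith) (by linarith))
  have hsmall : ∀ t : ℝ, 0 < t → t ≤ 1 → ∑' k₂ : ℤ,
      ENNReal.ofReal ((2 : ℝ) ^ (-(2 : ℝ) * (max k₂ 0 : ℤ)) *
        min ((2 : ℝ) ^ ((lam + 3 / 2) * (k₂ : ℝ)))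
          (t ^ (-(3 : ℝ) / 2) * (2 : ℝ) ^ ((lam - (3 / 2) * α + 3 / 2) * (k₂ : ℝ)))) ≤
      ENNReal.ofReal K₁ := by
    intro t ht _
    obtain ⟨s, hs⟩ := hrepr t ht
    have := H₁ 0 1 (fun k₂ : ℤ => (2 : ℝ) ^ (-(2 : ℝ) * (max k₂ 0 : ℤ)) *
        min ((2 : ℝ) ^ ((lam + 3 / 2) * (k₂ : ℝ)))
          (t ^ (-(3 : ℝ) / 2) * (2 : ℝ) ^ ((lam - (3 / 2) * α + 3 / 2) * (k₂ : ℝ))))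
      zero_le_one (fun k => by
        rw [one_mul, add_zero]
        exact term_le hs k (Or.inl (exponent_le k)))
    rwa [one_mul] at this
  rcases hcases with ⟨hβ1, hβ2⟩ | ⟨hβ1, hβ2⟩
  · obtain ⟨K₂, hK₂, H₂⟩ := tsum_le_of_geometric
      (c := min (lam + 3 / 2 - α * (1 + δ)) (2 - (lam + 3 / 2 - α * (1 + δ))))
      (lt_min (by linarith) (by nlinarith))
    refine combine (by linarith) hK₁ hK₂ hsmall fun t ht => ?_
    obtain ⟨s, hs⟩ := hrepr t (by linarith)
    refine H₂ 0 (t ^ (-(1 + δ))) _ (by positivity) fun k => ?_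
    have hE := exponent_le (b := lam + 3 / 2 - α * (1 + δ)) k
    have hts : t ^ (-(1 + δ)) = (2 : ℝ) ^ (-(α * (1 + δ) * s)) := by
      rw [hs, ← Real.rpow_mul (by norm_num)]
      ring_nf
    rw [hts, add_zero, ← Real.rpow_add (by norm_num)]
    refine term_le hs k ?_
    -- interpolation: the smaller entry has exponent at most `a k - α β (k + s)`
    rcases le_total ((k : ℝ) + s) 0 with hks | hks
    · left
      have : α * (1 + δ) * (k + s) ≤ 0 :=
        mul_nonpos_of_nonneg_of_nonpos (by positivity) hks
      linarith
    · right
      have : 0 ≤ α * (3 / 2 - (1 + δ)) * (k + s) :=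
        mul_nonneg (mul_nonneg hα0.le (by linarith)) hks
      linarith
  · set c := min (lam + 3 / 2) (3 / 2 * α - (lam + 3 / 2)) with hc
    have hc0 : 0 < c := lt_min (by linarith) (by linarith)
    have hc1 : c ≤ lam + 3 / 2 := min_le_left _ _
    have hc2 : c ≤ 3 / 2 * α - (lam + 3 / 2) := min_le_right _ _
    obtain ⟨K₂, hK₂, H₂⟩ := tsum_le_of_geometric hc0
    refine combine (K₂ := 2 ^ c * K₂) (by linarith) hK₁ (by positivity) hsmall fun t ht => ?_
    obtain ⟨s, hs⟩ := hrepr t (by linarith)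
    rw [← mul_assoc]
    refine H₂ ⌊s⌋ (t ^ (-(1 + δ)) * 2 ^ c) _ (by positivity) fun k => ?_
    have hts : t ^ (-(1 + δ)) = (2 : ℝ) ^ (-((lam + 3 / 2) * s)) := by
      rw [hs, ← Real.rpow_mul (by norm_num), ← hβ1]
      ring_nf
    rw [hts, ← Real.rpow_add (by norm_num), ← Real.rpow_add (by norm_num)]
    -- rounding the centre `s` to an integer costs at most the factor `2 ^ c`
    have hround : |((k + ⌊s⌋ : ℤ) : ℝ)| ≤ |(k : ℝ) + s| + 1 := by
      have h1 := Int.floor_le s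
      have h2 := Int.lt_floor_add_one s
      push_cast
      rw [abs_le]
      constructor <;> linarith [le_abs_self ((k : ℝ) + s), neg_abs_le ((k : ℝ) + s)]
    have hround' := mul_le_mul_of_nonneg_left hround hc0.le
    have hmax : (0 : ℝ) ≤ ((max k 0 : ℤ) : ℝ) := by exact_mod_cast le_max_right k 0
    refine term_le hs k ?_
    rcases le_total ((k : ℝ) + s) 0 with hks | hks
    · left
      rw [abs_of_nonpos hks] at hround'
      nlinarith [mul_nonneg (sub_nonneg.2 hc1) (neg_nonneg.2 hks)]
    · right
      rw [abs_of_nonneg hks] at hround'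
      nlinarith [mul_nonneg (sub_nonneg.2 hc2) hks]

end
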